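/- Let G ⊆ UT(n,ℝ) be a real unipotent group and let H, N be real algebraic subgroups of G with N normal in G. Assume α ∈ H^♯ and there is b ∈ G such that the coset bN is near α. Then bN ∩ H ≠ ∅, the set bN ∩ H is a coset of N ∩ H, and the coset bN ∩ H is near α as well. -/

import Mathlib

open Pointwise Filter

noncomputable section

/-- Square matrices of size `n` over `R`. -/
abbrev Mat (n : ℕ) (R : Type) : Type := Matrix (Fin n) (Fin n) R

/-- The set `UT(n,ℝ)` of upper triangular matrices with `1`s on the diagonal. -/
def UTset (n : ℕ) : Set (Mat n ℝ) :=
  {A | (∀ i, A i i = 1) ∧ ∀ i j : Fin n, (j : ℕ) < (i : ℕ) → A i j = 0}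

/-- The entries of a matrix, as a point of `ℝ^(n²)`. -/
def matEval {n : ℕ} (A : Mat n ℝ) : Fin n × Fin n → ℝ := fun ij => A ij.1 ij.2

/-- A real unipotent group: a subgroup of `UT(n,ℝ)` which is the common zero set in
`UT(n,ℝ)` of a family of real polynomials in the matrix entries. -/
def IsRealUnipotentGroup (n : ℕ) (G : Set (Mat n ℝ)) : Prop :=
  (∃ S : Set (MvPolynomial (Fin n × Fin n) ℝ),
      G = {A | A ∈ UTset n ∧ ∀ p ∈ S, MvPolynomial.eval (matEval A) p = 0}) ∧
    (1 : Mat n ℝ) ∈ G ∧ (∀ a ∈ G, ∀ b ∈ G, a * b ∈ G) ∧ ∀ a ∈ G, a⁻¹ ∈ G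

/-- A real algebraic subgroup of a real unipotent group `G`. -/
def IsRealAlgSubgroup (n : ℕ) (G H : Set (Mat n ℝ)) : Prop :=
  H ⊆ G ∧ IsRealUnipotentGroup n H

/-- `N` is a normal subgroup-set of `G`. -/
def IsNormalIn (n : ℕ) (G N : Set (Mat n ℝ)) : Prop :=
  ∀ g ∈ G, ∀ x ∈ N, g * x * g⁻¹ ∈ N

/-- `Γ` is a lattice in `G`: a discrete subgroup which is cocompact, i.e. there is a
compact `K ⊆ G` with `K·Γ = G` (equivalently, `G/Γ` is compact). -/
def IsLatticeIn (n : ℕ) (G Γ : Set (Mat n ℝ)) : Prop :=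
  Γ ⊆ G ∧ (1 : Mat n ℝ) ∈ Γ ∧ (∀ a ∈ Γ, ∀ b ∈ Γ, a * b ∈ Γ) ∧ (∀ a ∈ Γ, a⁻¹ ∈ Γ) ∧
    DiscreteTopology ↥Γ ∧
    ∃ K : Set (Mat n ℝ), K ⊆ G ∧ IsCompact K ∧ ∀ g ∈ G, ∃ k ∈ K, ∃ γ ∈ Γ, g = k * γ

/-- `H` is `Γ`-rational: `Γ ∩ H` is a lattice in `H`. -/
def IsRationalFor (n : ℕ) (Γ H : Set (Mat n ℝ)) : Prop :=
  IsLatticeIn n H (Γ ∩ H)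

/-- The hyperreal matrix represented by a sequence of real matrices. -/
def matOfSeq (n : ℕ) (u : ℕ → Mat n ℝ) : Mat n Hyperreal :=
  Matrix.of fun i j => Hyperreal.ofSeq fun k => u k i j

/-- The nonstandard extension `S^♯` of a set `S` of real matrices: hyperreal matrices
represented by sequences landing in `S` on a set of indices in the ultrafilter. -/
def matSharp (n : ℕ) (S : Set (Mat n ℝ)) : Set (Mat n Hyperreal) :=
  {A | ∃ u : ℕ → Mat n ℝ, (∀ᶠ k in hyperfilter ℕ, u k ∈ S) ∧ A = matOfSeq n u}

/-- The canonical embedding of real matrices into hyperreal matrices. -/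
def matCast {n : ℕ} (A : Mat n ℝ) : Mat n Hyperreal :=
  Matrix.of fun i j => (A i j : Hyperreal)

/-- `μ(G)`: elements of `G^♯` all of whose entries are infinitesimally close to the
corresponding entries of the identity matrix. -/
def muSet (n : ℕ) (G : Set (Mat n ℝ)) : Set (Mat n Hyperreal) :=
  {A | A ∈ matSharp n G ∧ ∀ i j, Hyperreal.Infinitesimal (A i j - (1 : Mat n Hyperreal) i j)}

/-- The coset `gH` is near `α`, i.e. `α ∈ μ(G)·g·H^♯`. -/
def NearCoset (n : ℕ) (G : Set (Mat n ℝ)) (g : Mat n ℝ) (H : Set (Mat n ℝ))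
    (α : Mat n Hyperreal) : Prop :=
  α ∈ muSet n G * ({matCast g} * matSharp n H)

/-- The set of standard parts of the finite elements of a set of hyperreal matrices. -/
def matStSet (n : ℕ) (A : Set (Mat n Hyperreal)) : Set (Mat n ℝ) :=
  {B | ∃ a ∈ A, ∀ i j, Hyperreal.IsSt (a i j) (B i j)}

/-- A polynomial map `ℝ^d → Mat n ℝ`. -/
def IsPolyMapVec (d n : ℕ) (F : (Fin d → ℝ) → Mat n ℝ) : Prop :=
  ∃ P : Fin n → Fin n → MvPolynomial (Fin d) ℝ,
    ∀ x i j, F x i j = MvPolynomial.eval x (P i j)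

/-- The inclusion `ℝ →+* ℝ*` as a ring homomorphism. -/
def realHyperRingHom : ℝ →+* Hyperreal where
  toFun r := (r : Hyperreal)
  map_one' := Hyperreal.coe_one
  map_mul' := Hyperreal.coe_mul
  map_zero' := Hyperreal.coe_zero
  map_add' := Hyperreal.coe_add

/-- A semialgebraic subset of matrix space: a finite union of sets defined by finitely
many polynomial equations and finitely many strict polynomial inequalities. -/
def IsSemialgebraic (n : ℕ) (S : Set (Mat n ℝ)) : Prop :=
  ∃ (k : ℕ) (P Q : Fin k → Finset (MvPolynomial (Fin n × Fin n) ℝ)),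
    S = ⋃ t : Fin k, {A | (∀ p ∈ P t, MvPolynomial.eval (matEval A) p = 0) ∧
      ∀ q ∈ Q t, 0 < MvPolynomial.eval (matEval A) q}


namespace Unip

/-- Polynomial curves in matrix space. -/
def IsPC {n : ℕ} (f : ℝ → Mat n ℝ) : Prop :=
  ∃ F : Fin n → Fin n → Polynomial ℝ, ∀ t i j, f t i j = (F i j).eval t

lemma poly_eq_zero {p : Polynomial ℝ} (h : ∀ k : ℕ, p.eval (k : ℝ) = 0) : p = 0 := by
  apply Polynomial.eq_zero_of_infinite_isRoot
  refine Set.Infinite.mono ?_ (Set.infinite_range_of_injective (Nat.cast_injective (R := ℝ)))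
  rintro _ ⟨k, rfl⟩
  exact h k

lemma IsPC.mul {n : ℕ} {f g : ℝ → Mat n ℝ} (hf : IsPC f) (hg : IsPC g) :
    IsPC (fun t => f t * g t) := by
  obtain ⟨F, hF⟩ := hf
  obtain ⟨E, hE⟩ := hg
  refine ⟨fun i j => ∑ l, F i l * E l j, fun t i j => ?_⟩
  simp [Matrix.mul_apply, Polynomial.eval_finset_sum, hF, hE]

lemma IsPC.const {n : ℕ} (A : Mat n ℝ) : IsPC (fun _ => A) :=
  ⟨fun i j => Polynomial.C (A i j), fun t i j => by simp⟩

lemma IsPC.ext_nat {n : ℕ} {f g : ℝ → Mat n ℝ} (hf : IsPC f) (hg : IsPC g)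
    (h : ∀ k : ℕ, f k = g k) (t : ℝ) : f t = g t := by
  obtain ⟨F, hF⟩ := hf
  obtain ⟨E, hE⟩ := hg
  ext i j
  have : F i j - E i j = 0 := poly_eq_zero fun k => by
    rw [Polynomial.eval_sub, ← hF, ← hE, h, sub_self]
  rw [hF, hE, sub_eq_zero.1 this]

lemma IsPC.mem {n : ℕ} {f : ℝ → Mat n ℝ} (hf : IsPC f) {N : Set (Mat n ℝ)}
    (hN : IsRealUnipotentGroup n N) (h : ∀ k : ℕ, f k ∈ N) (t : ℝ) : f t ∈ N := by
  obtain ⟨F, hF⟩ := hf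
  obtain ⟨⟨S, rfl⟩, -⟩ := hN
  refine ⟨⟨fun i => ?_, fun i j hij => ?_⟩, fun p hp => ?_⟩
  · have : F i i - 1 = 0 := poly_eq_zero fun k => by
      rw [Polynomial.eval_sub, ← hF, (h k).1.1]; simp
    rw [hF, sub_eq_zero.1 this]; simp
  · have : F i j = 0 := poly_eq_zero fun k => by
      rw [← hF, (h k).1.2 i j hij]
    rw [hF, this]; simp
  · have key : ∀ t : ℝ, (MvPolynomial.aeval (fun ij : Fin n × Fin n => F ij.1 ij.2) p).eval t =
        MvPolynomial.eval (matEval (f t)) p := by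
      intro t
      have h1 : matEval (f t) = fun ij : Fin n × Fin n => (F ij.1 ij.2).eval t := by
        funext ij; exact hF t _ _
      rw [h1]
      clear hp
      induction p using MvPolynomial.induction_on' with
      | monomial u a => simp [MvPolynomial.aeval_monomial, MvPolynomial.eval_monomial,
          Finsupp.prod, Polynomial.eval_prod]
      | add p q hp hq => simp_all
    have : MvPolynomial.aeval (fun ij : Fin n × Fin n => F ij.1 ij.2) p = 0 :=
      poly_eq_zero fun k => by rw [key, (h k).2 p hp]
    rw [← key, this]; simp

lemma IsPC.continuous {n : ℕ} {f : ℝ → Mat n ℝ} (hf : IsPC f) : Continuous f := by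
  obtain ⟨F, hF⟩ := hf
  refine continuous_matrix fun i j => ?_
  simp only [hF]
  exact (F i j).continuous

lemma ut_det {n : ℕ} {A : Mat n ℝ} (h : A ∈ UTset n) : A.det = 1 := by
  rw [Matrix.det_of_upperTriangular (fun i j hij => h.2 i j hij)]
  simp [h.1]

lemma ut_mul_inv {n : ℕ} {A : Mat n ℝ} (h : A ∈ UTset n) : A * A⁻¹ = 1 :=
  Matrix.mul_nonsing_inv A (by rw [ut_det h]; exact isUnit_one)

lemma ut_inv_mul {n : ℕ} {A : Mat n ℝ} (h : A ∈ UTset n) : A⁻¹ * A = 1 :=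
  Matrix.nonsing_inv_mul A (by rw [ut_det h]; exact isUnit_one)

lemma ut_nilp {n : ℕ} {A : Mat n ℝ} (h : A ∈ UTset n) : (A - 1) ^ n = 0 := by
  have h1 := Matrix.aeval_self_charpoly A
  rw [Matrix.charpoly_of_upperTriangular A (fun i j hij => h.2 i j hij)] at h1
  simpa [h.1] using h1

/-- Real powers of a unipotent matrix. -/
def rp {n : ℕ} (A : Mat n ℝ) (t : ℝ) : Mat n ℝ :=
  ∑ j ∈ Finset.range n, ((descPochhammer ℝ j).eval t / (j.factorial : ℝ)) • (A - 1) ^ j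

lemma rp_pc {n : ℕ} (A : Mat n ℝ) : IsPC (rp A) := by
  refine ⟨fun i l => ∑ j ∈ Finset.range n,
    descPochhammer ℝ j * Polynomial.C ((j.factorial : ℝ)⁻¹ * ((A - 1) ^ j) i l), fun t i l => ?_⟩
  simp [rp, Matrix.sum_apply, Polynomial.eval_finset_sum, div_eq_mul_inv, mul_assoc]

lemma rp_nat {n : ℕ} {A : Mat n ℝ} (h : A ∈ UTset n) (k : ℕ) : rp A (k : ℝ) = A ^ k := by
  have h1 : A ^ k = ((A - 1) + 1) ^ k := by simp
  rw [h1, (Commute.one_right (A - 1)).add_pow]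
  have h2 : ∀ j : ℕ, (descPochhammer ℝ j).eval (k : ℝ) / (j.factorial : ℝ) = (k.choose j : ℝ) := by
    intro j
    rw [descPochhammer_eval_eq_descFactorial, Nat.descFactorial_eq_factorial_mul_choose]
    have : (j.factorial : ℝ) ≠ 0 := by positivity
    push_cast; field_simp
  have h3 : ∀ M, n ≤ M → k + 1 ≤ M →
      (∑ j ∈ Finset.range n, (k.choose j : ℝ) • (A - 1) ^ j) =
      ∑ m ∈ Finset.range (k + 1), (A - 1) ^ m * 1 ^ (k - m) * (k.choose m : Mat n ℝ) := by
    intro M hn hk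
    have e1 : (∑ j ∈ Finset.range n, (k.choose j : ℝ) • (A - 1) ^ j) =
        ∑ j ∈ Finset.range M, (k.choose j : ℝ) • (A - 1) ^ j := by
      apply Finset.sum_subset (by simpa using hn)
      intro j _ hj
      have : n ≤ j := by simpa using hj
      rw [pow_eq_zero_of_le this (ut_nilp h), smul_zero]
    have e2 : (∑ m ∈ Finset.range (k + 1), (A - 1) ^ m * 1 ^ (k - m) * (k.choose m : Mat n ℝ)) =
        ∑ m ∈ Finset.range M, (A - 1) ^ m * 1 ^ (k - m) * (k.choose m : Mat n ℝ) := by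
      apply Finset.sum_subset (by simpa using hk)
      intro j _ hj
      have : k < j := by simpa using hj
      rw [Nat.choose_eq_zero_of_lt this]; simp
    rw [e1, e2]
    refine Finset.sum_congr rfl fun j _ => ?_
    rw [one_pow, mul_one, ← Nat.cast_comm, ← nsmul_eq_mul, Nat.cast_smul_eq_nsmul]
  rw [rp, ← h3 (max n (k + 1)) (le_max_left _ _) (le_max_right _ _)]
  exact Finset.sum_congr rfl fun j _ => by rw [h2]

/-- The coordinates in the central filtration order. -/
def coord (n m : ℕ) (A : Mat n ℝ) : ℝ :=
  if h : m % n + m / n < n ∧ 0 < m / n then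
    A ⟨m % n, by omega⟩ ⟨m % n + m / n, h.1⟩ else 0

lemma coord_eq {n : ℕ} (A : Mat n ℝ) (i j : Fin n) (hij : (i : ℕ) < j) :
    coord n (((j : ℕ) - i) * n + i) A = A i j := by
  have hn : 0 < n := by have := i.2; omega
  have h1 : (((j : ℕ) - i) * n + i) % n = i := by
    rw [Nat.mul_add_mod_self_right, Nat.mod_eq_of_lt i.2]
  have h2 : (((j : ℕ) - i) * n + i) / n = j - i := by
    rw [Nat.add_div_of_dvd_right (Dvd.intro_left _ rfl), Nat.mul_div_cancel _ hn,
      Nat.div_eq_of_lt i.2, add_zero]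
  have hj := j.2
  rw [coord, dif_pos (by rw [h1, h2]; omega)]
  congr 1
  · exact Fin.ext h1
  · apply Fin.ext; simp only [h1, h2]; omega

lemma coord_cont (n m : ℕ) : Continuous (coord n m) := by
  unfold coord
  split_ifs with h
  · exact Continuous.matrix_elem continuous_id _ _
  · exact continuous_const

lemma coord_one (n m : ℕ) : coord n m 1 = 0 := by
  unfold coord
  split_ifs with h
  · rw [Matrix.one_apply_ne]
    intro h'
    have := congrArg Fin.val h'
    simp only at this
    omega
  · rfl

lemma entry_mul {n : ℕ} (m i d : ℕ) {x y : Mat n ℝ} (hx : x ∈ UTset n) (hy : y ∈ UTset n)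
    (h : ∀ l < m, coord n l x = 0) (hi : i < n) (hm1 : i + d < n) (hm2 : 0 < d)
    (hml : d * n + i = m) :
    (x * y) ⟨i, hi⟩ ⟨i + d, hm1⟩ = x ⟨i, hi⟩ ⟨i + d, hm1⟩ + y ⟨i, hi⟩ ⟨i + d, hm1⟩ := by
  rw [Matrix.mul_apply, Finset.sum_eq_add (⟨i, hi⟩ : Fin n) ⟨i + d, hm1⟩]
  · rw [hx.1, hy.1]; ring
  · intro h'
    have := congrArg Fin.val h'
    simp only at this
    omega
  · rintro l - ⟨h1, h2⟩
    have h1' : (l : ℕ) ≠ i := fun e => h1 (Fin.ext e)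
    have h2' : (l : ℕ) ≠ i + d := fun e => h2 (Fin.ext e)
    rcases lt_or_ge (l : ℕ) i with hl | hl
    · rw [hx.2 _ _ hl, zero_mul]
    rcases lt_or_ge (i + d) (l : ℕ) with hl' | hl'
    · rw [hy.2 _ _ hl', mul_zero]
    have := coord_eq x ⟨i, hi⟩ l (by simp only; omega)
    rw [← this, h, zero_mul]
    simp only
    rw [← hml]
    have : ((l : ℕ) - i) < d := by omega
    have hn : 0 < n := by omega
    have := Nat.mul_lt_mul_of_pos_right this hn
    omega
  · simp
  · simp

lemma coord_mul {n : ℕ} (m : ℕ) {x y : Mat n ℝ} (hx : x ∈ UTset n) (hy : y ∈ UTset n)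
    (h : ∀ l < m, coord n l x = 0) : coord n m (x * y) = coord n m x + coord n m y := by
  by_cases hm : m % n + m / n < n ∧ 0 < m / n
  · simp only [coord, dif_pos hm]
    exact entry_mul m _ _ hx hy h _ hm.1 hm.2 (Nat.div_add_mod' m n)
  · simp only [coord, dif_neg hm, add_zero]

lemma eq_one_of_coord {n : ℕ} {x : Mat n ℝ} (hx : x ∈ UTset n)
    (h : ∀ l < n * n, coord n l x = 0) : x = 1 := by
  ext i j
  rcases lt_trichotomy (i : ℕ) j with hij | hij | hij
  · rw [← coord_eq x i j hij, h, Matrix.one_apply_ne (fun e => by rw [e] at hij; omega)]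
    have hj := j.2
    have hi := i.2
    calc ((j : ℕ) - i) * n + i < ((j : ℕ) - i) * n + n := by omega
      _ = ((j : ℕ) - i + 1) * n := by ring
      _ ≤ n * n := Nat.mul_le_mul_right _ (by omega)
  · obtain rfl := Fin.ext hij
    rw [hx.1, Matrix.one_apply_eq]
  · rw [hx.2 _ _ hij, Matrix.one_apply_ne (fun e => by rw [e] at hij; omega)]

lemma coord_poly {n : ℕ} (m : ℕ) {f : ℝ → Mat n ℝ} (hf : IsPC f) :
    ∃ p : Polynomial ℝ, ∀ t, coord n m (f t) = p.eval t := by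
  obtain ⟨F, hF⟩ := hf
  unfold coord
  split_ifs with h
  · exact ⟨_, fun t => hF t _ _⟩
  · exact ⟨0, by simp⟩

/-- Basic group-like closure facts. -/
lemma RU.sub {n : ℕ} {G : Set (Mat n ℝ)} (hG : IsRealUnipotentGroup n G) : G ⊆ UTset n := by
  obtain ⟨⟨S, rfl⟩, -⟩ := hG
  exact fun x hx => hx.1

lemma RU.pow {n : ℕ} {G : Set (Mat n ℝ)} (hG : IsRealUnipotentGroup n G) {x : Mat n ℝ}
    (hx : x ∈ G) (k : ℕ) : x ^ k ∈ G := by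
  induction k with
  | zero => simpa using hG.2.1
  | succ k ih => rw [pow_succ']; exact hG.2.2.1 _ hx _ ih

lemma RU.rp {n : ℕ} {G : Set (Mat n ℝ)} (hG : IsRealUnipotentGroup n G) {x : Mat n ℝ}
    (hx : x ∈ G) (t : ℝ) : rp x t ∈ G :=
  (rp_pc x).mem hG (fun k => by rw [rp_nat (RU.sub hG hx)]; exact RU.pow hG hx k) t

lemma coord_rp {n : ℕ} {G : Set (Mat n ℝ)} (hG : IsRealUnipotentGroup n G) (m : ℕ) {x : Mat n ℝ}
    (hx : x ∈ G) (h : ∀ l < m, coord n l x = 0) (t : ℝ) :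
    coord n m (rp x t) = t * coord n m x := by
  have hk : ∀ k : ℕ, coord n m (x ^ k) = k * coord n m x := by
    intro k
    induction k with
    | zero => simp [coord_one]
    | succ k ih =>
      rw [pow_succ', coord_mul m (RU.sub hG hx) (RU.sub hG (RU.pow hG hx k)) h, ih]
      push_cast; ring
  obtain ⟨p, hp⟩ := coord_poly m (rp_pc x)
  have : p - Polynomial.X * Polynomial.C (coord n m x) = 0 := poly_eq_zero fun k => by
    simp [← hp, rp_nat (RU.sub hG hx), hk]; ring
  rw [hp, sub_eq_zero.1 this]; simp; ring

lemma coord_inv {n : ℕ} {G : Set (Mat n ℝ)} (hG : IsRealUnipotentGroup n G) (m : ℕ) {x : Mat n ℝ}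
    (hx : x ∈ G) (h : ∀ l < m, coord n l x = 0) : coord n m x⁻¹ = - coord n m x := by
  have := coord_mul m (RU.sub hG hx) (RU.sub hG (hG.2.2.2 x hx)) h
  rw [ut_mul_inv (RU.sub hG hx), coord_one] at this
  linarith

lemma rp_mul_inv {n : ℕ} {G : Set (Mat n ℝ)} (hG : IsRealUnipotentGroup n G) {x : Mat n ℝ}
    (hx : x ∈ G) (t : ℝ) : rp x t * rp x⁻¹ t = 1 := by
  refine ((rp_pc x).mul (rp_pc x⁻¹)).ext_nat (IsPC.const 1) (fun k => ?_) t
  rw [rp_nat (RU.sub hG hx), rp_nat (RU.sub hG (hG.2.2.2 x hx))]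
  have hc : Commute x x⁻¹ := by
    rw [Commute, SemiconjBy, ut_mul_inv (RU.sub hG hx), ut_inv_mul (RU.sub hG hx)]
  rw [← hc.mul_pow, ut_mul_inv (RU.sub hG hx), one_pow]

lemma rp_zero {n : ℕ} {G : Set (Mat n ℝ)} (hG : IsRealUnipotentGroup n G) {x : Mat n ℝ}
    (hx : x ∈ G) : rp x 0 = 1 := by
  simpa using rp_nat (RU.sub hG hx) 0

section main
variable {n : ℕ} {G H N : Set (Mat n ℝ)}

lemma conj_mem (hG : IsRealUnipotentGroup n G) (hNn : IsNormalIn n G N) {g x : Mat n ℝ}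
    (hg : g ∈ G) (hx : x ∈ N) : g⁻¹ * x * g ∈ N := by
  have := hNn g⁻¹ (hG.2.2.2 g hg) x hx
  rwa [Matrix.nonsing_inv_nonsing_inv _ (by rw [ut_det (RU.sub hG hg)]; exact isUnit_one)] at this

/-- The product set `HN`. -/
def KK (H N : Set (Mat n ℝ)) : Set (Mat n ℝ) := {g | ∃ h ∈ H, ∃ v ∈ N, g = h * v}

lemma KK_mul (hG : IsRealUnipotentGroup n G) (hH : IsRealAlgSubgroup n G H)
    (hN : IsRealAlgSubgroup n G N) (hNn : IsNormalIn n G N) {a b h k v w : Mat n ℝ}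
    (hh : h ∈ H) (hk : k ∈ H) (hv : v ∈ N) (hw : w ∈ N) (ha : a = h * v) (hb : b = k * w) :
    ∃ z ∈ N, a * b = (h * k) * z := by
  refine ⟨(k⁻¹ * v * k) * w, hN.2.2.2.1 _ (conj_mem hG hNn (hH.1 hk) hv) _ hw, ?_⟩
  have e : k * k⁻¹ = 1 := ut_mul_inv (RU.sub hH.2 hk)
  calc a * b = h * 1 * v * k * w := by subst ha hb; simp only [mul_one, mul_assoc]
    _ = _ := by rw [← e]; simp only [mul_assoc]

lemma KK_sub (hG : IsRealUnipotentGroup n G) (hH : IsRealAlgSubgroup n G H)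
    (hN : IsRealAlgSubgroup n G N) : KK H N ⊆ G := by
  rintro _ ⟨h, hh, v, hv, rfl⟩
  exact hG.2.2.1 _ (hH.1 hh) _ (hN.1 hv)

lemma KK_mul_mem (hG : IsRealUnipotentGroup n G) (hH : IsRealAlgSubgroup n G H)
    (hN : IsRealAlgSubgroup n G N) (hNn : IsNormalIn n G N) {a b : Mat n ℝ}
    (ha : a ∈ KK H N) (hb : b ∈ KK H N) : a * b ∈ KK H N := by
  obtain ⟨h, hh, v, hv, ea⟩ := ha
  obtain ⟨k, hk, w, hw, eb⟩ := hb
  obtain ⟨z, hz, e⟩ := KK_mul hG hH hN hNn hh hk hv hw ea eb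
  exact ⟨_, hH.2.2.2.1 _ hh _ hk, z, hz, e⟩

lemma KK_inv (hH : IsRealAlgSubgroup n G H)
    (hN : IsRealAlgSubgroup n G N) (hNn : IsNormalIn n G N) {a : Mat n ℝ}
    (ha : a ∈ KK H N) : a⁻¹ ∈ KK H N := by
  obtain ⟨h, hh, v, hv, rfl⟩ := ha
  refine ⟨h⁻¹, hH.2.2.2.2 _ hh, h * v⁻¹ * h⁻¹, hNn h (hH.1 hh) _ (hN.2.2.2.2 _ hv), ?_⟩
  rw [Matrix.mul_inv_rev, ← mul_assoc, ← mul_assoc, ut_inv_mul (RU.sub hH.2 hh), one_mul]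

/-- `(hv)^t = h^t v_t` with `v_t ∈ N`. -/
lemma KK_rp (hG : IsRealUnipotentGroup n G) (hH : IsRealAlgSubgroup n G H)
    (hN : IsRealAlgSubgroup n G N) (hNn : IsNormalIn n G N) {h v : Mat n ℝ}
    (hh : h ∈ H) (hv : v ∈ N) (t : ℝ) : ∃ z ∈ N, rp (h * v) t = rp h t * z := by
  have hx : h * v ∈ G := KK_sub hG hH hN ⟨h, hh, v, hv, rfl⟩
  have hk : ∀ k : ℕ, ∃ z ∈ N, (h * v) ^ k = h ^ k * z := by
    intro k
    induction k with
    | zero => exact ⟨1, hN.2.2.1, by simp⟩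
    | succ k ih =>
      obtain ⟨z, hz, e⟩ := ih
      rw [pow_succ', pow_succ' h]
      exact KK_mul hG hH hN hNn hh (RU.pow hH.2 hh k) hv hz rfl e
  refine ⟨rp h⁻¹ t * rp (h * v) t, ?_, ?_⟩
  · refine ((rp_pc h⁻¹).mul (rp_pc (h * v))).mem hN.2 (fun k => ?_) t
    obtain ⟨z, hz, e⟩ := hk k
    have hc : Commute h⁻¹ h := by
      rw [Commute, SemiconjBy, ut_mul_inv (RU.sub hH.2 hh), ut_inv_mul (RU.sub hH.2 hh)]
    rw [rp_nat (RU.sub hG hx), rp_nat (RU.sub hH.2 (hH.2.2.2.2 h hh)), e, ← mul_assoc,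
      ← hc.mul_pow, ut_inv_mul (RU.sub hH.2 hh), one_pow, one_mul]
    exact hz
  · rw [← mul_assoc, rp_mul_inv hH.2 hh, one_mul]

/-- `HN` is closed and `H → HN/N` has a continuous section. -/
lemma KK_main (hG : IsRealUnipotentGroup n G) (hH : IsRealAlgSubgroup n G H)
    (hN : IsRealAlgSubgroup n G N) (hNn : IsNormalIn n G N) (d : ℕ) : ∀ m : ℕ, m + d = n * n →
    IsClosed {g | g ∈ KK H N ∧ ∀ l < m, coord n l g = 0} ∧
    ∃ s : Mat n ℝ → Mat n ℝ, Continuous s ∧ s 1 = 1 ∧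
      ∀ g ∈ KK H N, (∀ l < m, coord n l g = 0) → s g ∈ H ∧ ∃ v ∈ N, g = s g * v := by
  induction d with
  | zero =>
    intro m hm
    have h1 : ∀ g ∈ KK H N, (∀ l < m, coord n l g = 0) → g = 1 := fun g hg hl =>
      eq_one_of_coord (RU.sub hG (KK_sub hG hH hN hg)) (by simpa [← hm] using hl)
    have h2 : (1 : Mat n ℝ) ∈ KK H N := ⟨1, hH.2.2.1, 1, hN.2.2.1, by simp⟩
    constructor
    · have : {g | g ∈ KK H N ∧ ∀ l < m, coord n l g = 0} = {1} := by
        ext g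
        constructor
        · rintro ⟨hg, hl⟩; exact h1 g hg hl
        · rintro rfl; exact ⟨h2, fun l _ => coord_one n l⟩
      rw [this]; exact isClosed_singleton
    · refine ⟨fun _ => 1, continuous_const, rfl, fun g hg hl => ⟨hH.2.2.1, 1, hN.2.2.1, ?_⟩⟩
      rw [h1 g hg hl, one_mul]
  | succ d ih =>
    intro m hm
    obtain ⟨hcl, s, hs, hs1, hsK⟩ := ih (m + 1) (by omega)
    by_cases hA : ∀ g ∈ KK H N, (∀ l < m, coord n l g = 0) → coord n m g = 0
    · have hA' : ∀ g ∈ KK H N, (∀ l < m, coord n l g = 0) → ∀ l < m + 1, coord n l g = 0 := by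
        intro g hg hl l hlm
        rcases Nat.lt_succ_iff_lt_or_eq.1 hlm with h | rfl
        · exact hl l h
        · exact hA g hg hl
      constructor
      · convert hcl using 1
        ext g
        exact ⟨fun h => ⟨h.1, hA' g h.1 h.2⟩, fun h => ⟨h.1, fun l hl => h.2 l (by omega)⟩⟩
      · exact ⟨s, hs, hs1, fun g hg hl => hsK g hg (hA' g hg hl)⟩
    · push Not at hA
      obtain ⟨x, hx, hxl, hxm⟩ := hA
      have hxG := KK_sub hG hH hN hx
      have hxiK := KK_inv hH hN hNn hx
      have hxiG := KK_sub hG hH hN hxiK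
      obtain ⟨h, hh, v, hv, hxe⟩ := hx
      let T : Mat n ℝ → ℝ := fun g => coord n m g / coord n m x
      have hT : Continuous T := (coord_cont n m).div_const _
      let r : Mat n ℝ → Mat n ℝ := fun g => rp x⁻¹ (T g) * g
      have hr : Continuous r := ((rp_pc x⁻¹).continuous.comp hT).mul continuous_id
      have hrg : ∀ g, g = rp x (T g) * r g := fun g => by
        simp only [r]; rw [← mul_assoc, rp_mul_inv hG hxG, one_mul]
      have hxK : ∀ t, rp x t ∈ KK H N := fun t => by
        obtain ⟨z, hz, e⟩ := KK_rp hG hH hN hNn hh hv t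
        exact ⟨_, RU.rp hH.2 hh t, z, hz, by rw [hxe]; exact e⟩
      have hxiK' : ∀ t, rp x⁻¹ t ∈ KK H N := fun t => by
        obtain ⟨h', hh', v', hv', hxe'⟩ := hxiK
        obtain ⟨z, hz, e⟩ := KK_rp hG hH hN hNn hh' hv' t
        exact ⟨_, RU.rp hH.2 hh' t, z, hz, by rw [hxe']; exact e⟩
      have hil : ∀ l < m, coord n l x⁻¹ = 0 := fun l hl => by
        rw [coord_inv hG l hxG (fun l' hl' => hxl l' (by omega)), hxl l hl, neg_zero]
      have him : coord n m x⁻¹ = - coord n m x := coord_inv hG m hxG hxl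
      have hpl : ∀ t, ∀ l < m, coord n l (rp x⁻¹ t) = 0 := fun t l hl => by
        rw [coord_rp hG l hxiG (fun l' hl' => hil l' (by omega)), hil l hl, mul_zero]
      have hrK : ∀ g ∈ KK H N, (∀ l < m, coord n l g = 0) →
          r g ∈ KK H N ∧ ∀ l < m + 1, coord n l (r g) = 0 := by
        intro g hg hl
        refine ⟨KK_mul_mem hG hH hN hNn (hxiK' _) hg, fun l hlm => ?_⟩
        have hadd : coord n l (r g) = coord n l (rp x⁻¹ (T g)) + coord n l g :=
          coord_mul l (RU.sub hG (KK_sub hG hH hN (hxiK' _))) (RU.sub hG (KK_sub hG hH hN hg))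
            (fun l' hl' => hpl _ l' (by omega))
        rw [hadd]
        rcases Nat.lt_succ_iff_lt_or_eq.1 hlm with h | rfl
        · rw [hpl _ l h, hl l h, add_zero]
        · rw [coord_rp hG l hxiG hil, him]
          simp only [T]
          field_simp
          ring
      constructor
      · have : {g | g ∈ KK H N ∧ ∀ l < m, coord n l g = 0} =
            (⋂ l ∈ {l | l < m}, {g | coord n l g = 0}) ∩
              r ⁻¹' {g | g ∈ KK H N ∧ ∀ l < m + 1, coord n l g = 0} := by
          ext g
          simp only [Set.mem_inter_iff, Set.mem_iInter, Set.mem_setOf_eq, Set.mem_preimage]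
          constructor
          · rintro ⟨hg, hl⟩
            exact ⟨hl, hrK g hg hl⟩
          · rintro ⟨hl, hg, -⟩
            refine ⟨?_, hl⟩
            rw [hrg g]
            exact KK_mul_mem hG hH hN hNn (hxK _) hg
        rw [this]
        exact (isClosed_biInter fun l _ => isClosed_eq (coord_cont n l) continuous_const).inter
          (hcl.preimage hr)
      · refine ⟨fun g => rp h (T g) * s (r g),
          ((rp_pc h).continuous.comp hT).mul (hs.comp hr), ?_, fun g hg hl => ?_⟩
        · have hT1 : T 1 = 0 := by simp [T, coord_one]
          have hr1 : r 1 = 1 := by simp [r, hT1, rp_zero hG hxiG]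
          simp only [hT1, hr1, hs1, rp_zero hH.2 hh, mul_one]
        · obtain ⟨hg', hl'⟩ := hrK g hg hl
          obtain ⟨hsH, w, hw, e⟩ := hsK _ hg' hl'
          refine ⟨hH.2.2.2.1 _ (RU.rp hH.2 hh _) _ hsH, ?_⟩
          obtain ⟨z, hz, ez⟩ := KK_rp hG hH hN hNn hh hv (T g)
          rw [← hxe] at ez
          obtain ⟨y, hy, ey⟩ := KK_mul hG hH hN hNn (RU.rp hH.2 hh _) hsH hz hw ez e
          rw [← hrg g] at ey
          exact ⟨y, hy, ey⟩

lemma matOfSeq_mul (u v : ℕ → Mat n ℝ) :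
    matOfSeq n u * matOfSeq n v = matOfSeq n (fun k => u k * v k) := by
  ext i j
  have h : ∀ (s : Finset (Fin n)) (f : Fin n → ℕ → ℝ),
      ∑ l ∈ s, Hyperreal.ofSeq (f l) = Hyperreal.ofSeq (fun k => ∑ l ∈ s, f l k) := by
    intro s f
    induction s using Finset.induction_on with
    | empty => simp; rfl
    | insert a s ha ih => simp only [Finset.sum_insert ha, ih]; rfl
  simp only [Matrix.mul_apply, matOfSeq, Matrix.of_apply]
  exact h Finset.univ (fun l k => u k i l * v k l j)

lemma matOfSeq_eq {u v : ℕ → Mat n ℝ} :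
    matOfSeq n u = matOfSeq n v ↔ ∀ᶠ k in hyperfilter ℕ, u k = v k := by
  have h : ∀ f g : ℕ → ℝ, Hyperreal.ofSeq f = Hyperreal.ofSeq g ↔
      ∀ᶠ k in hyperfilter ℕ, f k = g k := fun f g => Filter.Germ.coe_eq
  constructor
  · intro e
    have : ∀ i j, ∀ᶠ k in hyperfilter ℕ, u k i j = v k i j := fun i j =>
      (h _ _).1 (congrFun (congrFun e i) j)
    have h2 := Filter.eventually_all.2 fun i => Filter.eventually_all.2 (this i)
    filter_upwards [h2] with k hk
    ext i j
    exact hk i j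
  · intro e
    ext i j
    refine (h _ _).2 ?_
    filter_upwards [e] with k hk
    rw [hk]

lemma matCast_eq (b : Mat n ℝ) : matCast b = matOfSeq n (fun _ => b) := rfl

lemma matOfSeq_inf {u : ℕ → Mat n ℝ} :
    (∀ i j, Hyperreal.Infinitesimal (matOfSeq n u i j - (1 : Mat n Hyperreal) i j)) ↔
      Tendsto u (hyperfilter ℕ) (nhds 1) := by
  have h1 : ∀ i j, (matOfSeq n u i j - (1 : Mat n Hyperreal) i j) =
      Hyperreal.ofSeq (fun k => u k i j - (1 : Mat n ℝ) i j) := by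
    intro i j
    by_cases hij : i = j
    · subst hij; simp only [Matrix.one_apply_eq]; rfl
    · simp only [Matrix.one_apply_ne hij]; rfl
  simp only [h1, Hyperreal.Infinitesimal, Hyperreal.isSt_ofSeq_iff_tendsto]
  refine Iff.trans ?_ (tendsto_pi_nhds (f := u) (g := (1 : Mat n ℝ))).symm
  refine forall_congr' fun i => ?_
  refine Iff.trans ?_ (tendsto_pi_nhds (f := fun k => u k i) (g := (1 : Mat n ℝ) i)).symm
  refine forall_congr' fun j => ?_
  exact tendsto_sub_nhds_zero_iff

lemma near_iff {c : Mat n ℝ} {M : Set (Mat n ℝ)} {h : ℕ → Mat n ℝ} :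
    NearCoset n G c M (matOfSeq n h) ↔ ∃ e v : ℕ → Mat n ℝ,
      (∀ᶠ k in hyperfilter ℕ, e k ∈ G) ∧ (∀ᶠ k in hyperfilter ℕ, v k ∈ M) ∧
      Tendsto e (hyperfilter ℕ) (nhds 1) ∧ ∀ᶠ k in hyperfilter ℕ, h k = e k * (c * v k) := by
  constructor
  · intro hnear
    obtain ⟨E, ⟨⟨e, he, rfl⟩, hinf⟩, _, ⟨_, rfl, _, ⟨v, hv, rfl⟩, rfl⟩, heq⟩ := hnear
    refine ⟨e, v, he, hv, matOfSeq_inf.1 hinf, ?_⟩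
    simp only [matCast_eq, matOfSeq_mul] at heq
    exact matOfSeq_eq.1 heq.symm
  · rintro ⟨e, v, he, hv, ht, heq⟩
    refine ⟨_, ⟨⟨e, he, rfl⟩, matOfSeq_inf.2 ht⟩, _, ⟨_, rfl, _, ⟨v, hv, rfl⟩, rfl⟩, ?_⟩
    simp only [matCast_eq, matOfSeq_mul]
    refine matOfSeq_eq.2 ?_
    filter_upwards [heq] with k hk using hk.symm

end main

end Unip

open Unip in
/-- if `α ∈ H^♯` and `bN` is near `α` with `N` normal, then `bN ∩ H` is a
nonempty coset of `N ∩ H` near `α`. -/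
theorem stmt3 {n : ℕ} (G : Set (Mat n ℝ)) (hG : IsRealUnipotentGroup n G)
    (H N : Set (Mat n ℝ)) (hH : IsRealAlgSubgroup n G H) (hN : IsRealAlgSubgroup n G N)
    (hNnormal : IsNormalIn n G N)
    (α : Mat n Hyperreal) (hα : α ∈ matSharp n H)
    (b : Mat n ℝ) (hb : b ∈ G) (hnear : NearCoset n G b N α) :
    (({b} * N) ∩ H).Nonempty ∧
    ∀ c ∈ ({b} * N) ∩ H,
      ({b} * N) ∩ H = {c} * (N ∩ H) ∧ NearCoset n G c (N ∩ H) α := by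
  obtain ⟨h, hh, rfl⟩ := hα
  obtain ⟨e, v, he, hv, ht, heq⟩ := near_iff.1 hnear
  obtain ⟨hcl, s, hs, hs1, hsK⟩ := KK_main hG hH hN hNnormal (n * n) 0 (by simp)
  simp only [Nat.not_lt_zero, false_imp_iff, implies_true, and_true, Set.setOf_mem_eq,
    forall_true_left] at hcl hsK
  have hbK : b ∈ KK H N := by
    have htb : Tendsto (fun k => e k * b) (hyperfilter ℕ) (nhds b) := by
      simpa using ht.mul_const b
    refine hcl.mem_of_tendsto htb ?_
    filter_upwards [hh, hv, heq] with k h1 h2 h3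
    refine ⟨h k, h1, (v k)⁻¹, hN.2.2.2.2 _ h2, ?_⟩
    rw [h3, mul_assoc, mul_assoc, ut_mul_inv (RU.sub hN.2 h2), mul_one]
  constructor
  · obtain ⟨c, hc, w, hw, hbe⟩ := hbK
    refine ⟨c, ⟨b, rfl, w⁻¹, hN.2.2.2.2 _ hw, ?_⟩, hc⟩
    simp only [hbe]
    rw [mul_assoc, ut_mul_inv (RU.sub hN.2 hw), mul_one]
  rintro c ⟨⟨_, rfl, w, hw, hce⟩, hcH⟩
  simp only at hce
  rename_i b'
  have hwi := ut_mul_inv (RU.sub hN.2 hw)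
  have hci := ut_mul_inv (RU.sub hH.2 hcH)
  have hic := ut_inv_mul (RU.sub hH.2 hcH)
  have hbc : ∀ x, b' * x = c * (w⁻¹ * x) := fun x => by
    rw [← hce, mul_assoc, ← mul_assoc w, hwi, one_mul]
  constructor
  · ext g
    constructor
    · rintro ⟨⟨_, rfl, z, hz, rfl⟩, hgH⟩
      refine ⟨c, rfl, w⁻¹ * z, ⟨hN.2.2.2.1 _ (hN.2.2.2.2 _ hw) _ hz, ?_⟩, (hbc z).symm⟩
      simp only [hbc] at hgH
      have := hH.2.2.2.1 _ (hH.2.2.2.2 _ hcH) _ hgH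
      rwa [← mul_assoc, hic, one_mul] at this
    · rintro ⟨_, rfl, z, ⟨hzN, hzH⟩, rfl⟩
      refine ⟨⟨b', rfl, w * z, hN.2.2.2.1 _ hw _ hzN, ?_⟩, hH.2.2.2.1 _ hcH _ hzH⟩
      simp only [← mul_assoc, hce]
  · refine near_iff.2 ⟨fun k => s (e k), fun k => c⁻¹ * ((s (e k))⁻¹ * h k), ?_⟩
    have hkey : ∀ᶠ k in hyperfilter ℕ, s (e k) ∈ H ∧ c⁻¹ * ((s (e k))⁻¹ * h k) ∈ N ∩ H ∧
        h k = s (e k) * (c * (c⁻¹ * ((s (e k))⁻¹ * h k))) := by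
      filter_upwards [hh, hv, heq] with k h1 h2 h3
      have hx : w⁻¹ * v k ∈ N := hN.2.2.2.1 _ (hN.2.2.2.2 _ hw) _ h2
      have hxi := ut_mul_inv (RU.sub hN.2 hx)
      rw [hbc] at h3
      generalize w⁻¹ * v k = x at *
      have hek : e k ∈ KK H N := by
        refine ⟨h k * c⁻¹, hH.2.2.2.1 _ h1 _ (hH.2.2.2.2 _ hcH), c * x⁻¹ * c⁻¹,
          hNnormal c (hH.1 hcH) _ (hN.2.2.2.2 _ hx), ?_⟩
        calc e k = e k * (c * (x * (1 * x⁻¹)) * c⁻¹) := by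
              rw [one_mul, hxi, mul_one, hci, mul_one]
          _ = _ := by rw [h3, ← hic]; simp only [mul_assoc]
      obtain ⟨hsH, z, hz, hez⟩ := hsK _ hek
      have hsi := ut_mul_inv (RU.sub hH.2 hsH)
      have his := ut_inv_mul (RU.sub hH.2 hsH)
      refine ⟨hsH, ⟨?_, hH.2.2.2.1 _ (hH.2.2.2.2 _ hcH) _
        (hH.2.2.2.1 _ (hH.2.2.2.2 _ hsH) _ h1)⟩, ?_⟩
      · have : c⁻¹ * ((s (e k))⁻¹ * h k) = (c⁻¹ * z * c) * x := by
          generalize s (e k) = S at *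
          rw [h3, hez]
          calc c⁻¹ * (S⁻¹ * (S * z * (c * x))) = c⁻¹ * ((S⁻¹ * S) * z * (c * x)) := by
                simp only [mul_assoc]
            _ = _ := by rw [his, one_mul]; simp only [mul_assoc]
        rw [this]
        exact hN.2.2.2.1 _ (conj_mem hG hNnormal (hH.1 hcH) hz) _ hx
      · rw [← mul_assoc c, hci, one_mul, ← mul_assoc, hsi, one_mul]
    refine ⟨hkey.mono fun k hk => hH.1 hk.1, hkey.mono fun k hk => hk.2.1, ?_,
      hkey.mono fun k hk => hk.2.2⟩
    have := (hs.tendsto 1).comp ht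
    rwa [hs1] at this
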